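/- Let G be a finite, connected, simple graph with maximum degree at most 3, nonnegative Ricci curvature, and diameter at least 6, and let P = v_0 v_1 ⋯ v_l be a diameter path with l ≥ 6. Suppose that for every i with 1 ≤ i ≤ l − 1, the vertex v_i has no neighbor u ∉ {v_{i−1}, v_{i+1}} with d(v_0, u) ≤ i, and that the set K = { i : 1 ≤ i ≤ l − 1 and v_i has a neighbor u ∉ {v_{i−1}, v_{i+1}} with d(v_0, u) = i + 1 } is nonempty. Then max K ∈ {l−2, l−1}. -/

import Mathlib

open SimpleGraph

variable {V : Type*}

/-- Combinatorial (unnormalized) graph Laplacian. -/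
def lapl (G : SimpleGraph V) [G.LocallyFinite] (f : V → ℝ) (x : V) : ℝ :=
  ∑ y ∈ G.neighborFinset x, (f y - f x)

/-- Lin-Lu-Yau-Ollivier Ricci curvature (limit-free definition):
`κ(u,v) = inf { Δf(u) − Δf(v) : f 1-Lipschitz w.r.t. graph distance, f v − f u = 1 }`. -/
noncomputable def ricci (G : SimpleGraph V) [G.LocallyFinite] (u v : V) : ℝ :=
  sInf { r : ℝ | ∃ f : V → ℝ,
    (∀ x y : V, |f x - f y| ≤ (G.dist x y : ℝ)) ∧ f v - f u = 1 ∧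
    r = lapl G f u - lapl G f v }

/-- Nonnegative Ricci curvature on every edge. -/
def NonnegRicci (G : SimpleGraph V) [G.LocallyFinite] : Prop :=
  ∀ u v : V, G.Adj u v → 0 ≤ ricci G u v

/-! Let `b, c, d, e` be a geodesic whose vertices `c` and `d` have no further neighbors. Every
neighbor of `b` other than `c` is then at distance 3 from `d`, so testing the curvature of `b c`
against minus the distance to `d` gives `κ(b, c) ≤ 2 - deg b`. Hence, under nonnegative curvature,
a vertex of degree at least three on a geodesic is never followed by two consecutive interior
vertices of degree two. If no third neighbor stays level or goes down, the indices of upward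
branching are exactly the interior indices of degree at least three. -/

section Distance

variable {G : SimpleGraph V}

theorem abs_sub_le_one_of_adj {f : V → ℝ} (hf : ∀ x y : V, |f x - f y| ≤ (G.dist x y : ℝ))
    {x y : V} (hxy : G.Adj x y) : |f y - f x| ≤ 1 := by
  simpa only [dist_eq_one_iff_adj.mpr hxy.symm, Nat.cast_one] using hf y x

theorem abs_dist_sub_dist_le (hconn : G.Connected) (x y z : V) :
    |(G.dist x z : ℝ) - G.dist y z| ≤ G.dist x y := by
  have hx : (G.dist x z : ℝ) ≤ G.dist x y + G.dist y z := mod_cast hconn.dist_triangle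
  have hy : (G.dist y z : ℝ) ≤ G.dist x y + G.dist x z := by
    rw [G.dist_comm (u := x) (v := y)]
    exact mod_cast hconn.dist_triangle
  exact abs_le.mpr ⟨by linarith, by linarith⟩

theorem add_one_le_dist_of_forall_adj (hconn : G.Connected) {x z : V} {n : ℕ} (hne : x ≠ z)
    (h : ∀ y, G.Adj z y → n ≤ G.dist x y) : n + 1 ≤ G.dist x z := by
  obtain ⟨p, hp⟩ := hconn.exists_walk_length_eq_dist z x
  rw [G.dist_comm, ← hp]
  cases p with
  | nil => exact absurd rfl hne
  | cons hzy q =>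
    rw [Walk.length_cons]
    exact Nat.succ_le_succ ((h _ hzy).trans (G.dist_comm ▸ dist_le q))

end Distance

section Curvature

variable {G : SimpleGraph V} [G.LocallyFinite]

theorem abs_lapl_le_degree_mul {f : V → ℝ} {x : V} {C : ℝ}
    (hf : ∀ y, G.Adj x y → |f y - f x| ≤ C) : |lapl G f x| ≤ G.degree x * C := by
  rw [← G.card_neighborFinset_eq_degree, ← nsmul_eq_mul]
  exact (Finset.abs_sum_le_sum_abs _ _).trans
    (Finset.sum_le_card_nsmul _ _ _ fun y hy => hf y ((G.mem_neighborFinset x y).mp hy))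

theorem lapl_neg (f : V → ℝ) (x : V) : lapl G (-f) x = -lapl G f x := by
  simp only [lapl, Pi.neg_apply, ← Finset.sum_neg_distrib, neg_sub', sub_neg_eq_add]

theorem lapl_le_add_mul {f : V → ℝ} {x p : V} {C : ℝ} (hxp : G.Adj x p)
    (hf : ∀ y, G.Adj x y → y ≠ p → f y - f x ≤ C) :
    lapl G f x ≤ f p - f x + (G.degree x - 1) * C := by
  classical
  have hp : p ∈ G.neighborFinset x := (G.mem_neighborFinset x p).mpr hxp
  have hcard : (((G.neighborFinset x).erase p).card : ℝ) = G.degree x - 1 :=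
    eq_sub_of_add_eq (mod_cast Finset.card_erase_add_one hp)
  rw [lapl, ← Finset.add_sum_erase _ _ hp, ← hcard, ← nsmul_eq_mul]
  gcongr
  refine Finset.sum_le_card_nsmul _ _ _ fun y hy => ?_
  obtain ⟨hyp, hxy⟩ := Finset.mem_erase.mp hy
  exact hf y ((G.mem_neighborFinset x y).mp hxy) hyp

theorem ricci_le_lapl_sub {u v : V} {f : V → ℝ}
    (hf : ∀ x y : V, |f x - f y| ≤ (G.dist x y : ℝ)) (huv : f v - f u = 1) :
    ricci G u v ≤ lapl G f u - lapl G f v := by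
  -- The infimum of a set that is not bounded below would be `0`.
  refine csInf_le ⟨-(G.degree u + G.degree v : ℝ), ?_⟩ ⟨f, hf, huv, rfl⟩
  rintro _ ⟨g, hg, -, rfl⟩
  have hu := abs_le.mp (abs_lapl_le_degree_mul fun y => abs_sub_le_one_of_adj hg (x := u) (y := y))
  have hv := abs_le.mp (abs_lapl_le_degree_mul fun y => abs_sub_le_one_of_adj hg (x := v) (y := y))
  linarith

theorem ricci_le_degree_sub_degree {f : V → ℝ} (hf : ∀ x y : V, |f x - f y| ≤ (G.dist x y : ℝ))
    {b c d : V} (hbc : G.Adj b c) (hcd : G.Adj c d) (hfbc : f c = f b + 1) (hfcd : f d = f c + 1)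
    (hdown : ∀ y, G.Adj b y → y ≠ c → f y ≤ f b - 1) :
    ricci G b c ≤ G.degree c - G.degree b := by
  have hb : lapl G f b ≤ f c - f b + (G.degree b - 1) * (-1) :=
    lapl_le_add_mul hbc fun y hby hyc => by linarith [hdown y hby hyc]
  have hc : lapl G (-f) c ≤ (-f) d - (-f) c + (G.degree c - 1) * 1 :=
    lapl_le_add_mul hcd fun y hcy _ => by
      rw [Pi.neg_apply, Pi.neg_apply]
      linarith [(abs_le.mp (abs_sub_le_one_of_adj hf hcy)).1]
  rw [lapl_neg, Pi.neg_apply, Pi.neg_apply] at hc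
  linarith [ricci_le_lapl_sub hf (sub_eq_of_eq_add' hfbc)]

end Curvature

section Geodesic

variable {G : SimpleGraph V} [G.LocallyFinite]

theorem two_lt_degree_iff_exists_adj_ne_ne {x a b : V} (hxa : G.Adj x a)
    (hxb : G.Adj x b) (hab : a ≠ b) :
    2 < G.degree x ↔ ∃ y, G.Adj x y ∧ y ≠ a ∧ y ≠ b := by
  classical
  rw [← G.card_neighborFinset_eq_degree]
  constructor
  · intro h
    obtain ⟨y, hy, hyab⟩ :=
      Finset.exists_mem_notMem_of_card_lt_card (Finset.card_le_two.trans_lt h : _ < _)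
    simp only [Finset.mem_insert, Finset.mem_singleton, not_or] at hyab
    exact ⟨y, (G.mem_neighborFinset x y).mp hy, hyab⟩
  · rintro ⟨y, hxy, hya, hyb⟩
    exact Finset.two_lt_card.mpr ⟨a, by simpa, b, by simpa, y, by simpa, hab, hya.symm, hyb.symm⟩

theorem eq_or_eq_of_adj_of_degree_le_two {x a b y : V} (hx : G.degree x ≤ 2)
    (hxa : G.Adj x a) (hxb : G.Adj x b) (hab : a ≠ b) (hxy : G.Adj x y) : y = a ∨ y = b := by
  by_contra! hy
  exact hx.not_gt ((two_lt_degree_iff_exists_adj_ne_ne hxa hxb hab).mpr ⟨y, hxy, hy⟩)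

theorem three_le_dist_of_adj_of_degree_le_two (hconn : G.Connected) {b c d e y : V}
    (hbc : G.Adj b c) (hcd : G.Adj c d) (hde : G.Adj d e) (hbe : G.dist b e = 3)
    (hc : G.degree c ≤ 2) (hd : G.degree d ≤ 2) (hby : G.Adj b y) (hyc : y ≠ c) :
    3 ≤ G.dist y d := by
  have hbd : ¬ G.dist b d ≤ 1 := fun h => by
    have := hconn.dist_triangle (u := b) (v := d) (w := e)
    rw [dist_eq_one_iff_adj.mpr hde] at this
    omega
  have hbd_ne : b ≠ d := by rintro rfl; simp at hbd
  have hyd_ne : y ≠ d := by rintro rfl; exact hbd (dist_eq_one_iff_adj.mpr hby).le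
  have hce : c ≠ e := by rintro rfl; simp [dist_eq_one_iff_adj.mpr hbc] at hbe
  have hyc_dist : 2 ≤ G.dist y c := hconn.one_lt_dist_of_ne_of_not_adj hyc fun h => by
    rcases eq_or_eq_of_adj_of_degree_le_two hc hbc.symm hcd hbd_ne h.symm with rfl | rfl
    exacts [hby.ne rfl, hyd_ne rfl]
  have hye_dist : 2 ≤ G.dist y e := by
    have := hconn.dist_triangle (u := b) (v := y) (w := e)
    rw [dist_eq_one_iff_adj.mpr hby] at this
    omega
  refine add_one_le_dist_of_forall_adj hconn hyd_ne fun w hdw => ?_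
  rcases eq_or_eq_of_adj_of_degree_le_two hd hcd.symm hde hce hdw with rfl | rfl
  exacts [hyc_dist, hye_dist]

theorem ricci_le_two_sub_degree (hconn : G.Connected) {b c d e : V}
    (hbc : G.Adj b c) (hcd : G.Adj c d) (hde : G.Adj d e) (hbe : G.dist b e = 3)
    (hc : G.degree c ≤ 2) (hd : G.degree d ≤ 2) : ricci G b c ≤ 2 - G.degree b := by
  have hcd_dist : G.dist c d = 1 := dist_eq_one_iff_adj.mpr hcd
  have hbd_dist : G.dist b d = 2 := by
    have hbcd := hconn.dist_triangle (u := b) (v := c) (w := d)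
    have hbde := hconn.dist_triangle (u := b) (v := d) (w := e)
    rw [dist_eq_one_iff_adj.mpr hbc] at hbcd
    rw [dist_eq_one_iff_adj.mpr hde] at hbde
    omega
  have hfar : ∀ y, G.Adj b y → y ≠ c → -(G.dist y d : ℝ) ≤ -(G.dist b d : ℝ) - 1 := by
    intro y hby hyc
    have hyd : (3 : ℝ) ≤ G.dist y d :=
      mod_cast three_le_dist_of_adj_of_degree_le_two hconn hbc hcd hde hbe hc hd hby hyc
    rw [hbd_dist]
    push_cast
    linarith
  have hlip : ∀ x y, |-(G.dist x d : ℝ) - -(G.dist y d : ℝ)| ≤ G.dist x y := fun x y => by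
    rw [neg_sub_neg, abs_sub_comm]
    exact abs_dist_sub_dist_le hconn x y d
  have hdeg := ricci_le_degree_sub_degree (f := fun x => -(G.dist x d : ℝ)) hlip hbc hcd
    (by rw [hbd_dist, hcd_dist]; norm_num) (by rw [hcd_dist, dist_self]; norm_num) hfar
  have hc' : (G.degree c : ℝ) ≤ 2 := mod_cast hc
  linarith

end Geodesic

/-- The vertices `v 0, …, v l` form a geodesic path of length `l`; the values `v i` for `l < i`
are irrelevant. -/
structure IsGeodesicPath (G : SimpleGraph V) (l : ℕ) (v : ℕ → V) : Prop where
  adj : ∀ i < l, G.Adj (v i) (v (i + 1))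
  dist_ends : G.dist (v 0) (v l) = l

/-- The indices of the interior vertices of the path `v 0, …, v l` at which the graph branches off
the path, encoded as those of degree at least three. -/
def branchIndices (G : SimpleGraph V) [G.LocallyFinite] (l : ℕ) (v : ℕ → V) : Set ℕ :=
  { i | 0 < i ∧ i < l ∧ 2 < G.degree (v i) }

namespace IsGeodesicPath

variable {G : SimpleGraph V} {l : ℕ} {v : ℕ → V}

theorem exists_walk_length_eq (hv : IsGeodesicPath G l v) {i j : ℕ} (hij : i ≤ j) (hjl : j ≤ l) :
    ∃ p : G.Walk (v i) (v j), p.length = j - i := by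
  induction j, hij using Nat.le_induction with
  | base => exact ⟨.nil, by simp⟩
  | succ j hij ih =>
    obtain ⟨p, hp⟩ := ih (by omega)
    exact ⟨p.concat (hv.adj j (by omega)), by rw [Walk.length_concat]; omega⟩

theorem dist_eq (hv : IsGeodesicPath G l v) {i j : ℕ} (hij : i ≤ j) (hjl : j ≤ l) :
    G.dist (v i) (v j) = j - i := by
  obtain ⟨p, hp⟩ := hv.exists_walk_length_eq (Nat.zero_le i) (hij.trans hjl)
  obtain ⟨q, hq⟩ := hv.exists_walk_length_eq hij hjl
  obtain ⟨r, hr⟩ := hv.exists_walk_length_eq hjl le_rfl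
  obtain ⟨s, hs⟩ := q.reachable.exists_walk_length_eq_dist
  have hle : G.dist (v i) (v j) ≤ j - i := hq ▸ dist_le q
  have hge : l ≤ (p.append (s.append r)).length :=
    hv.dist_ends.symm.le.trans (dist_le _)
  rw [Walk.length_append, Walk.length_append] at hge
  omega

theorem two_lt_degree_iff [G.LocallyFinite] (hv : IsGeodesicPath G l v) {i : ℕ} (hi : 0 < i)
    (hil : i < l) :
    2 < G.degree (v i) ↔ ∃ u, G.Adj (v i) u ∧ u ≠ v (i - 1) ∧ u ≠ v (i + 1) := by
  have hprev : G.Adj (v i) (v (i - 1)) := by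
    simpa only [Nat.sub_add_cancel hi] using (hv.adj (i - 1) (by omega)).symm
  refine two_lt_degree_iff_exists_adj_ne_ne hprev (hv.adj i hil) fun h => ?_
  have hdist := hv.dist_eq (show i - 1 ≤ i + 1 by omega) hil
  rw [h, dist_self] at hdist
  omega

theorem branchIndices_eq_upward [G.LocallyFinite] (hv : IsGeodesicPath G l v)
    (hnolow : ∀ i : ℕ, 1 ≤ i → i ≤ l - 1 →
      ∀ u : V, G.Adj (v i) u → u ≠ v (i - 1) → u ≠ v (i + 1) → ¬ (G.dist (v 0) u ≤ i)) :
    branchIndices G l v = { i : ℕ | 1 ≤ i ∧ i ≤ l - 1 ∧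
      ∃ u : V, G.Adj (v i) u ∧ u ≠ v (i - 1) ∧ u ≠ v (i + 1) ∧ G.dist (v 0) u = i + 1 } := by
  ext i
  constructor
  · rintro ⟨hi, hil, hdeg⟩
    obtain ⟨u, hu, hprev, hnext⟩ := (hv.two_lt_degree_iff hi hil).mp hdeg
    have hup : ¬ G.dist (v 0) u ≤ i := hnolow i hi (by omega) u hu hprev hnext
    have hstep := hu.diff_dist_adj (u := v 0)
    rw [hv.dist_eq (Nat.zero_le i) hil.le] at hstep
    exact ⟨hi, by omega, u, hu, hprev, hnext, by omega⟩
  · rintro ⟨hi, hil, u, hu, hprev, hnext, -⟩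
    have hil' : i < l := by omega
    exact ⟨hi, hil', (hv.two_lt_degree_iff hi hil').mpr ⟨u, hu, hprev, hnext⟩⟩

theorem two_lt_degree_succ_or_add_two [G.LocallyFinite] (hv : IsGeodesicPath G l v)
    (hconn : G.Connected) {k : ℕ} (hkl : k + 3 ≤ l) (hric : 0 ≤ ricci G (v k) (v (k + 1)))
    (hk : 2 < G.degree (v k)) : 2 < G.degree (v (k + 1)) ∨ 2 < G.degree (v (k + 2)) := by
  by_contra! hdeg
  have hdist : G.dist (v k) (v (k + 3)) = 3 := by
    rw [hv.dist_eq (by omega) hkl, Nat.add_sub_cancel_left]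
  have hle := ricci_le_two_sub_degree hconn (hv.adj k (by omega)) (hv.adj (k + 1) (by omega))
    (hv.adj (k + 2) (by omega)) hdist hdeg.1 hdeg.2
  have hk' : (2 : ℝ) < G.degree (v k) := mod_cast hk
  linarith

end IsGeodesicPath

theorem max_upward_index_general (G : SimpleGraph V) [G.LocallyFinite] (hconn : G.Connected)
    {l : ℕ} {v : ℕ → V} (hv : IsGeodesicPath G l v)
    (hric : ∀ i < l, 0 ≤ ricci G (v i) (v (i + 1))) (hne : (branchIndices G l v).Nonempty) :
    sSup (branchIndices G l v) = l - 2 ∨ sSup (branchIndices G l v) = l - 1 := by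
  have hbdd : BddAbove (branchIndices G l v) := ⟨l, fun _ hi => hi.2.1.le⟩
  obtain ⟨-, hlt, hdeg⟩ := Nat.sSup_mem hne hbdd
  have hmax : ∀ i ∈ branchIndices G l v, i ≤ sSup (branchIndices G l v) := fun _ => le_csSup hbdd
  set k := sSup (branchIndices G l v)
  by_contra hk
  rcases hv.two_lt_degree_succ_or_add_two hconn (by omega) (hric k hlt) hdeg with h | h
  · exact absurd (hmax (k + 1) ⟨by omega, by omega, h⟩) (by omega)
  · exact absurd (hmax (k + 2) ⟨by omega, by omega, h⟩) (by omega)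

/-- Let `P = v 0, …, v l` (`l ≥ 6`) be a diameter path of a finite,
connected simple graph `G` with maximum degree at most 3 and nonnegative Ricci curvature.
Suppose no interior vertex `v i` has a third neighbor at distance `≤ i` from `v 0`, and let
`K` be the (nonempty) set of indices `1 ≤ i ≤ l − 1` such that `v i` has a third neighbor
at distance `i + 1` from `v 0`. Then `max K ∈ {l − 2, l − 1}`. -/
theorem max_upward_index (G : SimpleGraph V) [Fintype V] [G.LocallyFinite]
    (hconn : G.Connected) (hdeg : ∀ x : V, G.degree x ≤ 3) (hric : NonnegRicci G)
    (l : ℕ) (hl : 6 ≤ l) (v : ℕ → V)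
    (hadj : ∀ i < l, G.Adj (v i) (v (i + 1)))
    (hinj : ∀ i ≤ l, ∀ j ≤ l, v i = v j → i = j)
    (hgeo : G.dist (v 0) (v l) = l)
    (hdiam : ∀ x y : V, G.dist x y ≤ l)
    (hnolow : ∀ i : ℕ, 1 ≤ i → i ≤ l - 1 →
      ∀ u : V, G.Adj (v i) u → u ≠ v (i - 1) → u ≠ v (i + 1) → ¬ (G.dist (v 0) u ≤ i))
    (K : Set ℕ)
    (hK : K = { i : ℕ | 1 ≤ i ∧ i ≤ l - 1 ∧
      ∃ u : V, G.Adj (v i) u ∧ u ≠ v (i - 1) ∧ u ≠ v (i + 1) ∧ G.dist (v 0) u = i + 1 })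
    (hne : K.Nonempty) :
    sSup K = l - 2 ∨ sSup K = l - 1 := by
  obtain rfl := hK.trans (IsGeodesicPath.branchIndices_eq_upward ⟨hadj, hgeo⟩ hnolow).symm
  exact max_upward_index_general G hconn ⟨hadj, hgeo⟩ (fun i hi => hric _ _ (hadj i hi)) hne
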